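/- The set of possible heights for the circle is P_h(S¹) = {0,1,2,3,...} ∪ {+∞}: for every n ≥ 0 there is a subgroup H of Homeo(S¹) with h(H,S¹) = n, and there is one with infinite height. -/

import Mathlib

open Set Topology unitInterval

noncomputable section

/-- Group structure on self-homeomorphisms (composition). -/
instance homeoGroup {X : Type*} [TopologicalSpace X] : Group (X ≃ₜ X) where
  mul f g := g.trans f
  one := Homeomorph.refl X
  inv := Homeomorph.symm
  mul_assoc _ _ _ := Homeomorph.ext fun _ => rfl
  one_mul _ := Homeomorph.ext fun _ => rfl
  mul_one _ := Homeomorph.ext fun _ => rfl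
  inv_mul_cancel f := Homeomorph.ext fun x => f.symm_apply_apply x

/-- A set is invariant under a group of homeomorphisms. -/
def InvariantUnder {X : Type*} [TopologicalSpace X] (G : Subgroup (X ≃ₜ X)) (Y : Set X) : Prop :=
  ∀ g ∈ G, ∀ y ∈ Y, g y ∈ Y

/-- Lengths of strictly increasing chains of nonempty closed invariant sets ending at `univ`. -/
def heightSet {X : Type*} [TopologicalSpace X] (G : Subgroup (X ≃ₜ X)) : Set ℕ :=
  {n | ∃ Y : Fin (n + 1) → Set X,
    StrictMono Y ∧ (∀ i, (Y i).Nonempty ∧ IsClosed (Y i) ∧ InvariantUnder G (Y i)) ∧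
    Y (Fin.last n) = Set.univ}

/-- The height of a transformation group. -/
def height {X : Type*} [TopologicalSpace X] (G : Subgroup (X ≃ₜ X)) : ℕ∞ :=
  sSup ((fun n : ℕ => (n : ℕ∞)) '' heightSet G)

/-- The set of achievable heights on phase space `X`. -/
def PH (X : Type*) [TopologicalSpace X] : Set ℕ∞ :=
  {h | ∃ G : Subgroup (X ≃ₜ X), height G = h}

end

/-!
If the orbits of `G` are the fibers of a lower semicontinuous surjection `R : X → Fin (n + 1)`, then
`height G = n`: the sublevel sets of `R` form a chain of length `n`, and no chain is longer because
invariant sets are unions of fibers.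

Such ranks are built by adding one closed orbit at a time. The line is order isomorphic to
`ℤ ×ₗ WithBot ℝ`, the integers corresponding to the bottom elements and the gaps between them to
copies of `ℝ`. Order automorphisms of `ℝ` act on all the gaps simultaneously and automorphisms of
`ℤ` permute the gaps, so a rank on `ℝ` with `n + 1` values yields one with `n + 2` values, equal to
`0` on the integers. Since the circle is `OnePoint ℝ`, the point at infinity adds the last closed
orbit. The circle itself is a single orbit of its rotations, and all closed sets are invariant
under the trivial group, which accounts for the heights `0` and `⊤`.
-/

open Function

section Height

variable {X : Type*} [TopologicalSpace X] {G : Subgroup (X ≃ₜ X)}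

theorem InvariantUnder.preimage_image_eq {ι : Type*} {R : X → ι} {Y : Set X}
    (hY : InvariantUnder G Y) (hR : ∀ x y, R x = R y → ∃ g ∈ G, g x = y) :
    R ⁻¹' (R '' Y) = Y := by
  refine (subset_preimage_image R Y).antisymm' ?_
  rintro y ⟨x, hx, hxy⟩
  obtain ⟨g, hg, rfl⟩ := hR x y hxy
  exact hY g hg x hx

theorem lt_card_of_mem_heightSet {ι : Type*} [Finite ι] {R : X → ι}
    (hR : ∀ x y, R x = R y → ∃ g ∈ G, g x = y) {m : ℕ} (hm : m ∈ heightSet G) :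
    m < Nat.card ι := by
  obtain ⟨Y, hYmono, hY, -⟩ := hm
  have himage : StrictMono fun i ↦ R '' Y i := by
    refine Monotone.strictMono_of_injective (fun i j hij ↦ image_mono (hYmono.monotone hij)) ?_
    intro i j hij
    apply hYmono.injective
    rw [← (hY i).2.2.preimage_image_eq hR, ← (hY j).2.2.preimage_image_eq hR]
    exact congrArg (R ⁻¹' ·) hij
  have hncard : StrictMono fun i ↦ (R '' Y i).ncard := fun i j hij ↦ ncard_lt_ncard (himage hij)
  have hmem (i : Fin (m + 1)) : (R '' Y i).ncard ∈ Finset.Icc 1 (Nat.card ι) :=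
    Finset.mem_Icc.2 ⟨((hY i).1.image R).ncard_pos, ncard_le_card _⟩
  simpa using Finset.card_le_card_of_injOn (s := Finset.univ) _ (fun i _ ↦ hmem i)
    hncard.injective.injOn

theorem le_height_of_lowerSemicontinuous {n : ℕ} {R : X → Fin (n + 1)} (hsurj : Surjective R)
    (hR : LowerSemicontinuous R) (hinv : ∀ g ∈ G, ∀ x, R (g x) = R x) :
    (n : ℕ∞) ≤ height G := by
  refine le_sSup ⟨n, ⟨fun i ↦ R ⁻¹' Iic i, ?_, fun i ↦ ⟨?_, ?_, ?_⟩, ?_⟩, rfl⟩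
  · exact fun i j hij ↦ ⟨preimage_mono (Iic_subset_Iic.2 hij.le), fun h ↦
      hij.not_ge (Iic_subset_Iic.1 (hsurj.preimage_subset_preimage_iff.1 h))⟩
  · exact nonempty_Iic.preimage hsurj
  · exact lowerSemicontinuous_iff_isClosed_preimage.1 hR i
  · intro g hg y hy
    simpa only [mem_preimage, hinv g hg] using hy
  · ext x
    simp [Fin.le_last]

theorem exists_surjective_lowerSemicontinuous [T1Space X] [Infinite X] (n : ℕ) :
    ∃ R : X → Fin (n + 1), Surjective R ∧ LowerSemicontinuous R := by
  let e : Fin (n + 1) ↪ X := Fin.valEmbedding.trans (Infinite.natEmbedding X)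
  refine ⟨extend e id fun _ ↦ Fin.last n, fun i ↦ ⟨e i, e.injective.extend_apply _ _ i⟩,
    lowerSemicontinuous_iff_isClosed_preimage.2 fun i ↦ ?_⟩
  obtain rfl | hi := eq_or_ne i (Fin.last n)
  · simp [preimage, Fin.le_last]
  · refine ((finite_range e).subset fun x hx ↦ ?_).isClosed
    by_contra hxe
    rw [mem_preimage, extend_apply' _ _ _ hxe] at hx
    exact hi (Fin.last_le_iff.1 hx)

theorem height_bot_eq_top [T1Space X] [Infinite X] : height (⊥ : Subgroup (X ≃ₜ X)) = ⊤ := by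
  refine ENat.eq_top_iff_forall_ge.2 fun n ↦ ?_
  obtain ⟨R, hsurj, hR⟩ := exists_surjective_lowerSemicontinuous (X := X) n
  refine le_height_of_lowerSemicontinuous hsurj hR fun g hg _ ↦ ?_
  obtain rfl := Subgroup.mem_bot.1 hg
  rfl

end Height

/-- A rank function for a class `F` of self-maps of `X`: its sublevel sets form a chain of `n + 1`
closed sets, and any point is carried to any other of the same rank by a rank-preserving element of
`F`. The class is a parameter because ranks on `ℝ` are built with `F = ℝ ≃o ℝ`, ranks on the
circle with `F = Circle ≃ₜ Circle`. -/
structure IsHomogeneousRank {X : Type*} [TopologicalSpace X] (F : Type*) [FunLike F X X] {n : ℕ}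
    (R : X → Fin (n + 1)) : Prop where
  surjective : Surjective R
  lowerSemicontinuous : LowerSemicontinuous R
  exists_apply_eq : ∀ x y, R x = R y → ∃ g : F, (∀ z, R (g z) = R z) ∧ g x = y

/-- The group of all homeomorphisms that preserve the rank `R`, whose orbits are the fibers of `R`
when `R` is homogeneous. -/
def rankStabilizer {X ι : Type*} [TopologicalSpace X] (R : X → ι) : Subgroup (X ≃ₜ X) where
  carrier := {g | ∀ x, R (g x) = R x}
  mul_mem' {_ b} ha hb x := (ha (b x)).trans (hb x)
  one_mem' _ := rfl
  inv_mem' {a} ha x := by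
    change R (a.symm x) = R x
    rw [← ha (a.symm x), a.apply_symm_apply]

theorem isHomogeneousRank_const_zero {X F : Type*} [TopologicalSpace X] [Nonempty X] [FunLike F X X]
    (h : ∀ x y : X, ∃ g : F, g x = y) :
    IsHomogeneousRank F (n := 0) fun _ : X ↦ 0 where
  surjective := surjective_to_subsingleton (β := Fin 1) _
  lowerSemicontinuous := lowerSemicontinuous_const
  exists_apply_eq x y _ := (h x y).imp fun _ hg ↦ ⟨fun _ ↦ rfl, hg⟩

namespace IsHomogeneousRank

variable {X Y : Type*} [TopologicalSpace X] [TopologicalSpace Y] {n : ℕ} {R : X → Fin (n + 1)}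

theorem height_rankStabilizer (hR : IsHomogeneousRank (X ≃ₜ X) R) :
    height (rankStabilizer R) = n := by
  refine le_antisymm (sSup_le ?_) <|
    le_height_of_lowerSemicontinuous hR.surjective hR.lowerSemicontinuous fun _ hg ↦ hg
  rintro _ ⟨m, hm, rfl⟩
  have hlt : m < n + 1 := by simpa using lt_card_of_mem_heightSet hR.exists_apply_eq hm
  exact Nat.cast_le.2 (Nat.lt_succ_iff.1 hlt)

theorem comp_homeomorph (hR : IsHomogeneousRank (X ≃ₜ X) R) (e : Y ≃ₜ X) :
    IsHomogeneousRank (Y ≃ₜ Y) (R ∘ e) where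
  surjective := hR.surjective.comp e.surjective
  lowerSemicontinuous := hR.lowerSemicontinuous.comp e.continuous
  exists_apply_eq x y hxy := by
    obtain ⟨g, hg, hgx⟩ := hR.exists_apply_eq (e x) (e y) hxy
    exact ⟨(e.trans g).trans e.symm, fun z ↦ by simp [hg], by simp [hgx]⟩

theorem homeomorph_of_orderIso [PartialOrder X] [OrderTopology X]
    (hR : IsHomogeneousRank (X ≃o X) R) : IsHomogeneousRank (X ≃ₜ X) R where
  surjective := hR.surjective
  lowerSemicontinuous := hR.lowerSemicontinuous
  exists_apply_eq x y hxy := by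
    obtain ⟨g, hg, hgx⟩ := hR.exists_apply_eq x y hxy
    exact ⟨g.toHomeomorph, hg, hgx⟩

end IsHomogeneousRank

theorem lowerSemicontinuous_of_succ_isOpenMap {X Y : Type*} [TopologicalSpace X]
    [TopologicalSpace Y] {n : ℕ} {r : X → Fin (n + 1)} {R : Y → Fin (n + 2)}
    (hr : LowerSemicontinuous r)
    (hR : ∀ y, R y ≠ 0 → ∃ j : X → Y, IsOpenMap j ∧ y ∈ range j ∧ ∀ x, R (j x) = (r x).succ) :
    LowerSemicontinuous R := by
  intro y i hi
  obtain ⟨j, hj, ⟨x, rfl⟩, hRj⟩ := hR y (Fin.ne_zero_of_lt hi)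
  have hsucc : LowerSemicontinuous fun x ↦ (r x).succ :=
    continuous_of_discreteTopology.comp_lowerSemicontinuous hr Fin.strictMono_succ.monotone
  refine hj.nhds_le x (Filter.eventually_map.2 ?_)
  simp only [hRj] at hi ⊢
  exact hsucc x i hi

/-- The rank on `OnePoint X` that is `0` at infinity and one more than `r` on `X`. -/
def onePointRank {X : Type*} {n : ℕ} (r : X → Fin (n + 1)) (x : OnePoint X) : Fin (n + 2) :=
  x.elim 0 fun x ↦ (r x).succ

theorem isHomogeneousRank_onePointRank {X : Type*} [TopologicalSpace X] {n : ℕ}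
    {r : X → Fin (n + 1)} (hr : IsHomogeneousRank (X ≃ₜ X) r) :
    IsHomogeneousRank (OnePoint X ≃ₜ OnePoint X) (onePointRank r) where
  surjective := by
    refine Fin.cases ⟨OnePoint.infty, rfl⟩ fun i ↦ ?_
    obtain ⟨x, rfl⟩ := hr.surjective i
    exact ⟨x, rfl⟩
  lowerSemicontinuous := by
    refine lowerSemicontinuous_of_succ_isOpenMap hr.lowerSemicontinuous fun y hy ↦
      ⟨_, OnePoint.isOpenEmbedding_coe.isOpenMap, ?_, fun _ ↦ rfl⟩
    cases y with
    | infty => exact absurd rfl hy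
    | coe x => exact mem_range_self x
  exists_apply_eq
    | .infty, .infty, _ => ⟨.refl _, fun _ ↦ rfl, rfl⟩
    | .infty, .some y, hxy => absurd hxy.symm (Fin.succ_ne_zero _)
    | .some x, .infty, hxy => absurd hxy (Fin.succ_ne_zero _)
    | .some x, .some y, hxy => by
      obtain ⟨g, hg, rfl⟩ := hr.exists_apply_eq x y (Fin.succ_injective _ hxy)
      exact ⟨g.onePointCongr, OnePoint.rec rfl fun z ↦ congrArg Fin.succ (hg z), rfl⟩

/-- The rank on `WithBot α` that is `0` at `⊥` and one more than `r` on `α`. -/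
def withBotRank {α : Type*} {n : ℕ} (r : α → Fin (n + 1)) (x : WithBot α) : Fin (n + 2) :=
  x.recBotCoe 0 fun a ↦ (r a).succ

theorem IsHomogeneousRank.exists_withBotCongr_apply_eq {α : Type*} [PartialOrder α]
    [TopologicalSpace α] {n : ℕ} {r : α → Fin (n + 1)} (hr : IsHomogeneousRank (α ≃o α) r) :
    ∀ a b : WithBot α, withBotRank r a = withBotRank r b → ∃ g : α ≃o α,
      (∀ c, withBotRank r (g.withBotCongr c) = withBotRank r c) ∧ g.withBotCongr a = b
  | ⊥, ⊥, _ => ⟨.refl α, by simp, rfl⟩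
  | ⊥, (b : α), hab => absurd hab.symm (Fin.succ_ne_zero _)
  | (a : α), ⊥, hab => absurd hab (Fin.succ_ne_zero _)
  | (a : α), (b : α), hab => by
    obtain ⟨g, hg, rfl⟩ := hr.exists_apply_eq a b (Fin.succ_injective _ hab)
    exact ⟨g, WithBot.recBotCoe rfl fun c ↦ congrArg Fin.succ (hg c), rfl⟩

section Preorder

variable {α β : Type*} [Preorder α] [Preorder β] {n : ℕ}

/-- The rank on `β` obtained from a rank `r` on `α` by cutting `β` into copies of `α` indexed by
`ℤ`: the cut points get rank `0`, and `r` is raised by one on each copy. -/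
def lexRank (e : β ≃o ℤ ×ₗ WithBot α) (r : α → Fin (n + 1)) (x : β) : Fin (n + 2) :=
  withBotRank r (ofLex (e x)).2

theorem lexRank_symm_toLex (e : β ≃o ℤ ×ₗ WithBot α) (r : α → Fin (n + 1)) (k : ℤ)
    (b : WithBot α) : lexRank e r (e.symm (toLex (k, b))) = withBotRank r b := by
  rw [lexRank, e.apply_symm_apply, ofLex_toLex]

theorem range_symm_toLex_coe (e : β ≃o ℤ ×ₗ WithBot α) (k : ℤ) :
    range (fun a : α ↦ e.symm (toLex (k, ↑a))) =
      Ioo (e.symm (toLex (k, ⊥))) (e.symm (toLex (k + 1, ⊥))) := by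
  ext x
  obtain ⟨⟨l, b⟩, rfl⟩ := (toLex.trans e.symm.toEquiv).surjective x
  cases b with
  | bot => simp [Prod.Lex.toLex_lt_toLex]
  | coe a =>
    simp only [Equiv.trans_apply, OrderIso.toEquiv_symm, OrderIso.coe_symm_toEquiv, mem_range,
      EmbeddingLike.apply_eq_iff_eq, Prod.mk.injEq, WithBot.coe_inj, exists_eq_right, mem_Ioo,
      OrderIso.lt_iff_lt, Prod.Lex.toLex_lt_toLex, WithBot.bot_lt_coe, not_lt_bot]
    lia

end Preorder

section LinearOrder

variable {α β : Type*} [LinearOrder α] [TopologicalSpace α] [OrderTopology α] [LinearOrder β]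
  [TopologicalSpace β] [OrderTopology β] {n : ℕ}

theorem isOpenMap_symm_toLex_coe (e : β ≃o ℤ ×ₗ WithBot α) (k : ℤ) :
    IsOpenMap fun a : α ↦ e.symm (toLex (k, ↑a)) := by
  have hmono : StrictMono fun a : α ↦ e.symm (toLex (k, ↑a)) := fun a b hab ↦
    e.symm.strictMono (Prod.Lex.toLex_lt_toLex.2 (.inr ⟨rfl, WithBot.coe_lt_coe.2 hab⟩))
  have hrange := range_symm_toLex_coe e k
  have hemb := hmono.isEmbedding_of_ordConnected (hrange ▸ ordConnected_Ioo)
  exact (IsOpenEmbedding.mk hemb (hrange ▸ isOpen_Ioo)).isOpenMap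

theorem isHomogeneousRank_lexRank {r : α → Fin (n + 1)} (hr : IsHomogeneousRank (α ≃o α) r)
    (e : β ≃o ℤ ×ₗ WithBot α) :
    IsHomogeneousRank (β ≃o β) (lexRank e r) where
  surjective := by
    refine Fin.cases ⟨e.symm (toLex (0, ⊥)), lexRank_symm_toLex ..⟩ fun i ↦ ?_
    obtain ⟨a, rfl⟩ := hr.surjective i
    exact ⟨e.symm (toLex (0, ↑a)), lexRank_symm_toLex ..⟩
  lowerSemicontinuous := by
    refine lowerSemicontinuous_of_succ_isOpenMap hr.lowerSemicontinuous fun y hy ↦ ?_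
    obtain ⟨⟨k, b⟩, rfl⟩ := (toLex.trans e.symm.toEquiv).surjective y
    refine ⟨_, isOpenMap_symm_toLex_coe e k, ?_, fun _ ↦ lexRank_symm_toLex ..⟩
    cases b with
    | bot => exact absurd (lexRank_symm_toLex ..) hy
    | coe a => exact mem_range_self a
  exists_apply_eq x y hxy := by
    obtain ⟨g, hg, hgx⟩ := hr.exists_withBotCongr_apply_eq _ _ hxy
    let shift : ℤ ≃o ℤ := .addRight ((ofLex (e y)).1 - (ofLex (e x)).1)
    refine ⟨(e.trans (Prod.Lex.prodLexCongr shift g.withBotCongr)).trans e.symm, fun z ↦ ?_, ?_⟩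
    · simpa [lexRank] using hg _
    · rw [OrderIso.trans_apply, OrderIso.trans_apply, OrderIso.symm_apply_eq]
      exact congrArg toLex (Prod.ext (add_sub_cancel _ _) hgx)

end LinearOrder

section IntLex

variable {K γ : Type*} [Ring K] [LinearOrder K] [IsStrictOrderedRing K] {s : γ → K}

theorem strictMono_lex_intCast_add [LinearOrder γ] (hs : StrictMono s)
    (hrange : range s = Ico 0 1) :
    StrictMono fun x : ℤ ×ₗ γ ↦ ((ofLex x).1 : K) + s (ofLex x).2 := by
  have hmem (c : γ) : s c ∈ Ico (0 : K) 1 := hrange ▸ mem_range_self c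
  intro x y hxy
  obtain hlt | ⟨heq, hlt⟩ := Prod.Lex.lt_iff.1 hxy
  · calc ((ofLex x).1 : K) + s (ofLex x).2 < (ofLex x).1 + 1 := by gcongr; exact (hmem _).2
      _ ≤ (ofLex y).1 := mod_cast hlt
      _ ≤ (ofLex y).1 + s (ofLex y).2 := le_add_of_nonneg_right (hmem _).1
  · simpa only [heq, add_lt_add_iff_left] using hs hlt

theorem surjective_lex_intCast_add [FloorRing K] (hrange : range s = Ico 0 1) :
    Surjective fun x : ℤ ×ₗ γ ↦ ((ofLex x).1 : K) + s (ofLex x).2 := by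
  intro x
  obtain ⟨c, hc⟩ : Int.fract x ∈ range s := hrange ▸ ⟨Int.fract_nonneg x, Int.fract_lt_one x⟩
  exact ⟨toLex (⌊x⌋, c), by simp [hc]⟩

end IntLex

theorem strictMono_recBotCoe_sigmoid :
    StrictMono (WithBot.recBotCoe 0 Real.sigmoid : WithBot ℝ → ℝ)
  | ⊥, (b : ℝ), _ => Real.sigmoid_pos b
  | (a : ℝ), (b : ℝ), hab => Real.sigmoid_strictMono (WithBot.coe_lt_coe.1 hab)

theorem range_recBotCoe_sigmoid :
    range (WithBot.recBotCoe 0 Real.sigmoid : WithBot ℝ → ℝ) = Ico 0 1 := by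
  rw [← Ioo_insert_left one_pos, ← Real.range_sigmoid]
  ext x
  simp [WithBot.exists, eq_comm]

theorem nonempty_real_orderIso_lex : Nonempty (ℝ ≃o ℤ ×ₗ WithBot ℝ) :=
  ⟨(StrictMono.orderIsoOfSurjective _
    (strictMono_lex_intCast_add strictMono_recBotCoe_sigmoid range_recBotCoe_sigmoid)
    (surjective_lex_intCast_add range_recBotCoe_sigmoid)).symm⟩

theorem exists_isHomogeneousRank_real (n : ℕ) :
    ∃ R : ℝ → Fin (n + 1), IsHomogeneousRank (ℝ ≃o ℝ) R := by
  induction n with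
  | zero => exact ⟨_, isHomogeneousRank_const_zero fun x y ↦ ⟨.addRight (y - x), by simp⟩⟩
  | succ n ih =>
    obtain ⟨R, hR⟩ := ih
    obtain ⟨e⟩ := nonempty_real_orderIso_lex
    exact ⟨_, isHomogeneousRank_lexRank hR e⟩

theorem nonempty_circle_homeomorph_onePoint : Nonempty (Circle ≃ₜ OnePoint ℝ) := by
  have : Fact (Module.finrank ℝ ℂ = 1 + 1) := finrank_real_complex_fact'
  have hrank : Module.finrank ℝ ℝ = Module.finrank ℝ (ℝ ∙ (1 : ℂ))ᗮ := by
    rw [Module.finrank_self, Submodule.finrank_orthogonal_span_singleton (n := 1) one_ne_zero]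
  obtain ⟨e⟩ := FiniteDimensional.nonempty_continuousLinearEquiv_of_finrank_eq hrank
  exact ⟨(e.toHomeomorph.onePointCongr.trans
    (onePointHyperplaneHomeoUnitSphere norm_one)).symm⟩

theorem exists_isHomogeneousRank_circle :
    ∀ n : ℕ, ∃ R : Circle → Fin (n + 1), IsHomogeneousRank (Circle ≃ₜ Circle) R
  | 0 => ⟨_, isHomogeneousRank_const_zero fun x y ↦ ⟨.mulLeft (y / x), by simp⟩⟩
  | n + 1 => by
    obtain ⟨R, hR⟩ := exists_isHomogeneousRank_real n
    obtain ⟨e⟩ := nonempty_circle_homeomorph_onePoint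
    exact ⟨_, (isHomogeneousRank_onePointRank hR.homeomorph_of_orderIso).comp_homeomorph e⟩

/-- Every value in `{0, 1, 2, …} ∪ {+∞}` is the height of some transformation group on
the circle: `P_h(S¹) = ℕ∞`. -/
theorem PH_circle :
    (∀ n : ℕ, ∃ H : Subgroup (Circle ≃ₜ Circle), height H = (n : ℕ∞)) ∧
    (∃ H : Subgroup (Circle ≃ₜ Circle), height H = ⊤) ∧
    PH Circle = Set.univ := by
  have hfinite (n : ℕ) : ∃ H : Subgroup (Circle ≃ₜ Circle), height H = (n : ℕ∞) := by
    obtain ⟨R, hR⟩ := exists_isHomogeneousRank_circle n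
    exact ⟨rankStabilizer R, hR.height_rankStabilizer⟩
  have htop : ∃ H : Subgroup (Circle ≃ₜ Circle), height H = ⊤ := by
    obtain ⟨e⟩ := nonempty_circle_homeomorph_onePoint
    have : Infinite Circle := e.toEquiv.infinite_iff.2 inferInstance
    exact ⟨⊥, height_bot_eq_top⟩
  exact ⟨hfinite, htop, eq_univ_of_forall (ENat.recTopCoe htop hfinite)⟩
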